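/- Let N and ξ₁ be real numbers with 0 < ξ₁ < N. Then lim_{τ → 0+} ∫_{-N}^{N} 1/(ξ₁² - (t + iτ)²) dt = (1/ξ₁) · ln((N + ξ₁)/(N - ξ₁)), where the integrand is the complex-valued function of the real variable t obtained by shifting t into the upper half-plane by iτ, τ > 0. -/

import Mathlib

open MeasureTheory Filter Set

/-! `(log (z + ξ) - log (z - ξ)) / (2 ξ)` is a primitive of `1 / (ξ² - z²)`, so for `τ > 0` the
integral is a combination of the principal logarithms of `±N ± ξ + iτ`. The principal logarithm is
continuous on the closed upper half-plane minus the origin, hence `τ → 0+` simply puts `τ = 0`.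
There `log x + log (-x) = 2 log |x| + iπ` for every real `x ≠ 0`; the imaginary parts coming from
`x = N + ξ` and `x = N - ξ` cancel. -/

theorem hasDerivAt_log_add_sub_log_sub {ξ z : ℂ} (hξ : ξ ≠ 0) (hadd : z + ξ ∈ Complex.slitPlane)
    (hsub : z - ξ ∈ Complex.slitPlane) :
    HasDerivAt (fun z => (Complex.log (z + ξ) - Complex.log (z - ξ)) / (2 * ξ))
      (1 / (ξ ^ 2 - z ^ 2)) z := by
  have hlog := ((((hasDerivAt_id z).add_const ξ).clog hadd).sub
    (((hasDerivAt_id z).sub_const ξ).clog hsub)).div_const (2 * ξ)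
  refine hlog.congr_deriv ?_
  have hadd_ne := Complex.slitPlane_ne_zero hadd
  have hsub_ne := Complex.slitPlane_ne_zero hsub
  have hfactor : ξ ^ 2 - z ^ 2 = -((z + ξ) * (z - ξ)) := by ring
  rw [hfactor]
  simp only [id_eq]
  field_simp
  ring

theorem integral_one_div_sq_sub_sq_add {ξ w : ℂ} {a b : ℝ} (hξ : ξ ≠ 0)
    (hadd : ∀ t ∈ uIcc a b, t + w + ξ ∈ Complex.slitPlane)
    (hsub : ∀ t ∈ uIcc a b, t + w - ξ ∈ Complex.slitPlane) :
    ∫ t in a..b, 1 / (ξ ^ 2 - (t + w) ^ 2) =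
      (Complex.log (b + w + ξ) - Complex.log (b + w - ξ)) / (2 * ξ) -
        (Complex.log (a + w + ξ) - Complex.log (a + w - ξ)) / (2 * ξ) := by
  have hderiv : ∀ t ∈ uIcc a b, HasDerivAt
      (fun t : ℝ => (Complex.log (t + w + ξ) - Complex.log (t + w - ξ)) / (2 * ξ))
      (1 / (ξ ^ 2 - (t + w) ^ 2)) t := fun t ht =>
    ((hasDerivAt_log_add_sub_log_sub hξ (hadd t ht) (hsub t ht)).comp_add_const
      (t : ℂ) w).comp_ofReal
  have hne : ∀ t ∈ uIcc a b, ξ ^ 2 - (t + w) ^ 2 ≠ 0 := fun t ht => by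
    rw [sq_sub_sq, ← neg_sub _ ξ, add_comm ξ]
    exact mul_ne_zero (Complex.slitPlane_ne_zero (hadd t ht))
      (neg_ne_zero.2 (Complex.slitPlane_ne_zero (hsub t ht)))
  have hcont : ContinuousOn (fun t : ℝ => 1 / (ξ ^ 2 - (t + w) ^ 2)) (uIcc a b) :=
    continuousOn_const.div (by fun_prop) hne
  exact intervalIntegral.integral_eq_sub_of_hasDerivAt hderiv hcont.intervalIntegrable

theorem continuousWithinAt_log_im_nonneg {z : ℂ} (hz : z ≠ 0) :
    ContinuousWithinAt Complex.log {z | 0 ≤ z.im} z := by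
  by_cases hslit : z ∈ Complex.slitPlane
  · exact (continuousAt_clog hslit).continuousWithinAt
  · obtain ⟨hre, him⟩ : z.re ≤ 0 ∧ z.im = 0 := by
      simpa [Complex.mem_slitPlane_iff] using hslit
    have hre_ne : z.re ≠ 0 := fun h => hz (Complex.ext h him)
    exact Complex.continuousWithinAt_log_of_re_neg_of_im_zero (hre.lt_of_ne hre_ne) him

theorem tendsto_log_add_mul_I {z : ℂ} (hz : z ≠ 0) (him : 0 ≤ z.im) :
    Tendsto (fun τ : ℝ => Complex.log (z + τ * Complex.I)) (nhdsWithin 0 (Ioi 0))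
      (nhds (Complex.log z)) := by
  have hshift : ContinuousWithinAt (fun τ : ℝ => z + τ * Complex.I) (Ioi 0) 0 := by fun_prop
  have hmaps : MapsTo (fun τ : ℝ => z + τ * Complex.I) (Ioi 0) {z | 0 ≤ z.im} := fun τ hτ => by
    simpa using add_nonneg him (le_of_lt hτ)
  simpa [ContinuousWithinAt, Function.comp_def] using
    (continuousWithinAt_log_im_nonneg hz).comp_of_eq hshift hmaps (by simp)

theorem log_ofReal_add_log_neg_ofReal {x : ℝ} (hx : x ≠ 0) :
    Complex.log x + Complex.log (-x) = 2 * Real.log |x| + Real.pi * Complex.I := by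
  wlog hpos : 0 < x generalizing x
  · have hneg : 0 < -x := neg_pos.2 (lt_of_le_of_ne (not_lt.1 hpos) hx)
    simpa [add_comm] using this hneg.ne' hneg
  have hneg : Complex.arg (-x) = Real.pi := by
    simpa using Complex.arg_ofReal_of_neg (neg_lt_zero.2 hpos)
  apply Complex.ext
  · simp [Complex.log_re, two_mul]
  · simp [Complex.log_im, Complex.arg_ofReal_of_nonneg hpos.le, hneg]

theorem tendsto_integral_one_div_sq_sub_sq_add_mul_I {a b ξ : ℝ} (hξ : ξ ≠ 0)
    (ha : a + ξ ≠ 0) (ha' : a - ξ ≠ 0) (hb : b + ξ ≠ 0) (hb' : b - ξ ≠ 0) :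
    Tendsto (fun τ : ℝ => ∫ t in a..b, (1 : ℂ) / ((ξ : ℂ) ^ 2 - (t + τ * Complex.I) ^ 2))
      (nhdsWithin 0 (Ioi 0))
      (nhds ((Complex.log (b + ξ) - Complex.log (b - ξ)) / (2 * ξ) -
        (Complex.log (a + ξ) - Complex.log (a - ξ)) / (2 * ξ))) := by
  have hlim {x : ℝ} (hadd : x + ξ ≠ 0) (hsub : x - ξ ≠ 0) :
      Tendsto (fun τ : ℝ => (Complex.log (x + τ * Complex.I + ξ) -
        Complex.log (x + τ * Complex.I - ξ)) / (2 * ξ)) (nhdsWithin 0 (Ioi 0))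
        (nhds ((Complex.log (x + ξ) - Complex.log (x - ξ)) / (2 * ξ))) := by
    simp only [add_right_comm _ _ (ξ : ℂ), add_sub_right_comm _ _ (ξ : ℂ)]
    exact ((tendsto_log_add_mul_I (mod_cast hadd) (by simp)).sub
      (tendsto_log_add_mul_I (mod_cast hsub) (by simp))).div_const _
  refine ((hlim hb hb').sub (hlim ha ha')).congr' ?_
  filter_upwards [self_mem_nhdsWithin] with τ (hτ : 0 < τ)
  exact (integral_one_div_sq_sub_sq_add (mod_cast hξ)
    (fun t _ => Or.inr (by simpa using hτ.ne')) (fun t _ => Or.inr (by simpa using hτ.ne'))).symm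

theorem tendsto_integral_shifted_kernel_Icc_general {N ξ : ℝ} (hξ : ξ ≠ 0) (hN : N ≠ ξ)
    (hN' : N ≠ -ξ) :
    Tendsto (fun τ : ℝ => ∫ t in (-N)..N, (1 : ℂ) / ((ξ : ℂ) ^ 2 - (t + τ * Complex.I) ^ 2))
      (nhdsWithin 0 (Ioi 0)) (nhds ((1 / ξ * Real.log |(N + ξ) / (N - ξ)| : ℝ) : ℂ)) := by
  have hadd : N + ξ ≠ 0 := fun h => hN' (eq_neg_of_add_eq_zero_left h)
  have hsub : N - ξ ≠ 0 := sub_ne_zero.2 hN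
  convert tendsto_integral_one_div_sq_sub_sq_add_mul_I (a := -N) hξ (by grind) (by grind)
    hadd hsub using 2
  have hξ' : (ξ : ℂ) ≠ 0 := mod_cast hξ
  have hlog_add := log_ofReal_add_log_neg_ofReal hadd
  have hlog_sub := log_ofReal_add_log_neg_ofReal hsub
  push_cast [neg_add', neg_sub', sub_neg_eq_add] at hlog_add hlog_sub
  rw [abs_div, Real.log_div (abs_ne_zero.2 hadd) (abs_ne_zero.2 hsub)]
  push_cast
  field_simp
  linear_combination hlog_sub - hlog_add

/-- For `0 < ξ₁ < N`, the boundary-value limit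
`lim_{τ → 0+} ∫_{-N}^{N} 1/(ξ₁² - (t + iτ)²) dt = (1/ξ₁) · ln((N + ξ₁)/(N - ξ₁))`,
where for `τ > 0` the integrand is the continuous complex-valued function obtained by
shifting `t` into the upper half-plane by `iτ`. -/
theorem tendsto_integral_shifted_kernel_Icc (N ξ₁ : ℝ) (h0 : 0 < ξ₁) (hN : ξ₁ < N) :
    Tendsto (fun τ : ℝ =>
        ∫ t in (-N)..N, (1 : ℂ) / ((ξ₁ : ℂ) ^ 2 - ((t : ℂ) + (τ : ℂ) * Complex.I) ^ 2))
      (nhdsWithin 0 (Ioi 0))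
      (nhds (((1 / ξ₁) * Real.log ((N + ξ₁) / (N - ξ₁)) : ℝ) : ℂ)) := by
  simpa only [Real.log_abs] using
    tendsto_integral_shifted_kernel_Icc_general h0.ne' hN.ne' (by linarith)
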